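/- Let m be an atom mapping and η a most general unifier for m whose image is disjoint from the image of ω. Let h be a homomorphism (mapping every constant and null to itself) that is also a unifier for m. Then there exists a function τ: C ∪ N → C ∪ N such that h ⊆ τ ∘ (ηω), i.e., h(t) = τ(tηω) for every term t on which h is defined. -/

import Mathlib

/-! Common formalization of existential rules, homomorphisms, substitutions,
unifiers, rule applications, positive reliances and restraints. -/

/-- Terms: variables, constants, labelled nulls (each indexed by a natural number). -/
inductive Term where
  | var : ℕ → Term
  | const : ℕ → Term
  | null : ℕ → Term
deriving DecidableEq

namespace Term
def isVar : Term → Prop | var _ => True | _ => False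
def isConst : Term → Prop | const _ => True | _ => False
def isNull : Term → Prop | null _ => True | _ => False
end Term

/-- An atom is a predicate name applied to a list of terms (arity = list length). -/
structure Atom where
  pred : ℕ
  args : List Term
deriving DecidableEq

/-- Applying a function on terms to an atom, term-wise. -/
def Atom.map (f : Term → Term) (a : Atom) : Atom := ⟨a.pred, a.args.map f⟩

/-- Applying a function on terms to a set of atoms. -/
def mapSet (f : Term → Term) (A : Set Atom) : Set Atom := (Atom.map f) '' A

/-- The terms occurring in a set of atoms. -/
def termsOf (A : Set Atom) : Set Term := {t | ∃ a ∈ A, t ∈ a.args}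

/-- An interpretation is a set of atoms containing no variables. -/
def Interp (I : Set Atom) : Prop := ∀ t ∈ termsOf I, ¬ t.isVar

/-- A homomorphism from the atom set `A` to `I`: it fixes all constants and maps
every atom of `A` into `I`. -/
def isHom (h : Term → Term) (A I : Set Atom) : Prop :=
  (∀ c : ℕ, h (.const c) = .const c) ∧ ∀ a ∈ A, a.map h ∈ I

/-- A strong homomorphism additionally reflects atoms (over the terms of `A`). -/
def isStrongHom (h : Term → Term) (A I : Set Atom) : Prop :=
  isHom h A I ∧ ∀ a : Atom, (∀ t ∈ a.args, t ∈ termsOf A) → a.map h ∈ I → a ∈ A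

/-- A substitution fixes all constants and nulls. -/
def isSubst (θ : Term → Term) : Prop :=
  (∀ c : ℕ, θ (.const c) = .const c) ∧ (∀ n : ℕ, θ (.null n) = .null n)

/-- Atom mappings are partial functions on atoms. -/
def amDom (m : Atom → Option Atom) : Set Atom := {a | (m a).isSome}
def amRan (m : Atom → Option Atom) : Set Atom := {b | ∃ a, m a = some b}
def amAtoms (m : Atom → Option Atom) : Set Atom := amDom m ∪ amRan m

/-- θ is a unifier for the atom mapping m. -/
def isUnifier (θ : Term → Term) (m : Atom → Option Atom) : Prop :=
  isSubst θ ∧ ∀ a b : Atom, m a = some b → a.map θ = b.map θ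

/-- μ is a most general unifier for m. -/
def isMGU (μ : Term → Term) (m : Atom → Option Atom) : Prop :=
  isUnifier μ m ∧ ∀ ν, isUnifier ν m → ∃ σ, isSubst σ ∧ ∀ t, σ (μ t) = ν t

/-- An existential rule, given by its body and head (finite sets of atoms).
The universally quantified variables are those occurring in the body;
the existentially quantified ones are the head variables not occurring in the body. -/
structure Rule where
  body : Finset Atom
  head : Finset Atom

/-- The variables occurring in a set of atoms. -/
def varsOf (A : Set Atom) : Set Term := {t ∈ termsOf A | t.isVar}

def Rule.uvars (ρ : Rule) : Set Term := varsOf ↑ρ.body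
def Rule.evars (ρ : Rule) : Set Term := varsOf ↑ρ.head \ varsOf ↑ρ.body
def Rule.frontier (ρ : Rule) : Set Term := varsOf ↑ρ.body ∩ varsOf ↑ρ.head
def Rule.terms (ρ : Rule) : Set Term := termsOf ((↑ρ.body : Set Atom) ∪ ↑ρ.head)

/-- Rules contain no nulls (their atoms use only constants and variables). -/
def Rule.wf (ρ : Rule) : Prop := ∀ t ∈ ρ.terms, ¬ t.isNull

/-- A match of ρ in I is a homomorphism from its body to I. -/
def isMatch (h : Term → Term) (ρ : Rule) (I : Set Atom) : Prop := isHom h ↑ρ.body I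

/-- A match is satisfied if some homomorphism from the head to I agrees with it
on all frontier variables. -/
def satisfiedMatch (h : Term → Term) (ρ : Rule) (I : Set Atom) : Prop :=
  ∃ h', isHom h' ↑ρ.head I ∧ ∀ y ∈ ρ.frontier, h' y = h y

/-- h' extends the match h of ρ on I by mapping the existential variables to
distinct nulls not occurring in I. -/
def extendsMatch (ρ : Rule) (I : Set Atom) (h h' : Term → Term) : Prop :=
  (∀ t, t ∉ ρ.evars → h' t = h t) ∧
  (∀ z ∈ ρ.evars, ∃ n : ℕ, h' z = .null n ∧ Term.null n ∉ termsOf I) ∧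
  (∀ z₁ ∈ ρ.evars, ∀ z₂ ∈ ρ.evars, h' z₁ = h' z₂ → z₁ = z₂)

/-- J is obtained from the interpretation I by applying ρ for the (unsatisfied)
match h extended to h'. -/
def obtainedBy (ρ : Rule) (I : Set Atom) (h h' : Term → Term) (J : Set Atom) : Prop :=
  Interp I ∧ isMatch h ρ I ∧ ¬ satisfiedMatch h ρ I ∧ extendsMatch ρ I h h' ∧
  J = I ∪ mapSet h' ↑ρ.head

/-- The witnesses for ρ₂ positively relying on ρ₁ (Definition 1). -/
def posReliesVia (ρ₁ ρ₂ : Rule) (Ia Ib : Set Atom) (h₁ h₁' h₂ : Term → Term) : Prop :=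
  Ia ⊆ Ib ∧ obtainedBy ρ₁ Ia h₁ h₁' Ib ∧
  isMatch h₂ ρ₂ Ib ∧ ¬ satisfiedMatch h₂ ρ₂ Ib ∧ ¬ isMatch h₂ ρ₂ Ia

/-- ρ₂ positively relies on ρ₁, written ρ₁ ≺⁺ ρ₂. -/
def posRelies (ρ₁ ρ₂ : Rule) : Prop :=
  ∃ Ia Ib h₁ h₁' h₂, posReliesVia ρ₁ ρ₂ Ia Ib h₁ h₁' h₂

/-- hA is an alternative match of the match h (extended to h') of ρ on Ib (Definition 2). -/
def isAltMatch (ρ : Rule) (h h' : Term → Term) (Ib : Set Atom) (hA : Term → Term) : Prop :=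
  isHom hA (mapSet h' ↑ρ.head) Ib ∧
  (∀ t ∈ termsOf (mapSet h ↑ρ.body), hA t = t) ∧
  ∃ n : ℕ, Term.null n ∈ termsOf (mapSet h' ↑ρ.head) ∧
    Term.null n ∉ termsOf (mapSet hA (mapSet h' ↑ρ.head))

/-- The witnesses for ρ₁ restraining ρ₂ (Definition 3). -/
def restrainsVia (ρ₁ ρ₂ : Rule) (Ia Ib : Set Atom)
    (h₁ h₁' h₂ h₂' hA : Term → Term) : Prop :=
  ∃ Ja Jb : Set Atom, Ia ⊆ Ib ∧
    obtainedBy ρ₁ Jb h₁ h₁' Ib ∧ obtainedBy ρ₂ Ja h₂ h₂' Ia ∧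
    isAltMatch ρ₂ h₂ h₂' Ib hA ∧
    ¬ isAltMatch ρ₂ h₂ h₂' (Ib \ mapSet h₁' ↑ρ₁.head) hA

/-- ρ₁ restrains ρ₂, written ρ₁ ≺□ ρ₂. -/
def restrains (ρ₁ ρ₂ : Rule) : Prop :=
  ∃ Ia Ib h₁ h₁' h₂ h₂' hA, restrainsVia ρ₁ ρ₂ Ia Ib h₁ h₁' h₂ h₂' hA

/-- The fixed substitution ω: it maps each variable of Vex to a null and each
variable of Vall to a constant, injectively, fixing everything else, and its
values on Vall ∪ Vex avoid the terms in `fresh`. -/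
def isOmega (ω : Term → Term) (Vall Vex : Set Term) (fresh : Set Term) : Prop :=
  isSubst ω ∧
  (∀ v ∈ Vex, (ω v).isNull) ∧
  (∀ v ∈ Vall, (ω v).isConst) ∧
  (∀ t, t ∉ Vall ∪ Vex → ω t = t) ∧
  (∀ u ∈ Vall ∪ Vex, ∀ v ∈ Vall ∪ Vex, ω u = ω v → u = v) ∧
  (∀ v ∈ Vall ∪ Vex, ω v ∉ fresh)

/-- For a substitution θ, `away θ S` is the substitution that agrees with θ
outside of S and is the identity on S.  Thus θ∀ = `away θ Vex` and
θ∃ = `away θ Vall`. -/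
noncomputable def away (θ : Term → Term) (S : Set Term) : Term → Term :=
  fun t => @ite _ (t ∈ S) (Classical.propDecidable _) t (θ t)

/-- I ⊨ ∃ Z. ψ : there is a homomorphism ψ → I mapping every term of ψ other
than the (existential) variables in Z to itself. -/
def models (I : Set Atom) (ψ : Set Atom) (Z : Set Term) : Prop :=
  ∃ h : Term → Term, (∀ a ∈ ψ, a.map h ∈ I) ∧ ∀ t ∈ termsOf ψ, t ∉ Z → h t = t

/-- No null occurs in the atom set A. -/
def noNullsIn (A : Set Atom) : Prop := ∀ t ∈ termsOf A, ¬ t.isNull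

/-! The mgu `η` is at least as general as `h`, so `h = σ ∘ η` for some `σ`, and it suffices to undo
`ω` on the terms `tη`. Every value of `ω` at a variable it replaces is fresh and outside the image
of `η`, so `ω` moves no term onto one of the `tη`; since `ω` is injective on the terms it moves,
it is injective on the terms `tη`. Hence `tηω` determines `tη`, which in turn determines `h t`. -/

open Function Set

theorem injOn_of_injOn_compl_fixedPoints {α : Type*} {f : α → α} {S : Set α}
    (hinj : InjOn f (fixedPoints f)ᶜ) (hS : ∀ x, f x ∈ S → IsFixedPt f x) : InjOn f S := by
  have fixed_of_eq {x y : α} (hx : x ∈ S) (hfix : IsFixedPt f x) (hxy : f x = f y) :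
      IsFixedPt f y :=
    hS y (by rwa [← hxy, hfix])
  intro x hx y hy hxy
  by_cases hfx : IsFixedPt f x
  · exact hfx.symm.trans (hxy.trans (fixed_of_eq hx hfx hxy))
  · exact hinj hfx (fun hfy => hfx (fixed_of_eq hy hfy hxy.symm)) hxy

theorem termsOf_mono {A B : Set Atom} (hAB : A ⊆ B) : termsOf A ⊆ termsOf B :=
  fun _ ⟨a, ha, hta⟩ => ⟨a, hAB ha, hta⟩

theorem isHom.not_isVar {h : Term → Term} {A I : Set Atom} (hhom : isHom h A I) (hI : Interp I)
    {t : Term} (ht : t ∈ termsOf A) : ¬ (h t).isVar := by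
  obtain ⟨a, ha, hta⟩ := ht
  exact hI _ ⟨a.map h, hhom.2 a ha, List.mem_map_of_mem hta⟩

theorem isMGU.factorsThrough {μ ν : Term → Term} {m : Atom → Option Atom}
    (hμ : isMGU μ m) (hν : isUnifier ν m) : FactorsThrough ν μ := by
  obtain ⟨σ, -, hσ⟩ := hμ.2 ν hν
  intro s t hst
  rw [← hσ s, ← hσ t, hst]

namespace isOmega

variable {ω η : Term → Term} {Vall Vex F G : Set Term}

theorem anti (hω : isOmega ω Vall Vex G) (hFG : F ⊆ G) : isOmega ω Vall Vex F := by
  obtain ⟨hsubst, hnull, hconst, hout, hinj, hfresh⟩ := hω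
  exact ⟨hsubst, hnull, hconst, hout, hinj, fun v hv hF => hfresh v hv (hFG hF)⟩

theorem mem_of_not_isFixedPt (hω : isOmega ω Vall Vex F) {t : Term} (ht : ¬ IsFixedPt ω t) :
    t ∈ Vall ∪ Vex := by
  obtain ⟨-, -, -, hout, -, -⟩ := hω
  exact not_imp_comm.mp (hout t) ht

theorem injOn_compl_fixedPoints (hω : isOmega ω Vall Vex F) : InjOn ω (fixedPoints ω)ᶜ := by
  have ⟨_, _, _, _, hinj, _⟩ := hω
  exact fun u hu v hv => hinj u (hω.mem_of_not_isFixedPt hu) v (hω.mem_of_not_isFixedPt hv)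

theorem isFixedPt_of_mem_fresh (hω : isOmega ω Vall Vex F) {t : Term} (ht : ω t ∈ F) :
    IsFixedPt ω t := by
  have ⟨_, _, _, _, _, hfresh⟩ := hω
  by_contra hmoved
  exact hfresh t (hω.mem_of_not_isFixedPt hmoved) ht

theorem injOn_image (hω : isOmega ω Vall Vex F)
    (him : ∀ s t : Term, η s ≠ s → ω t ≠ t → η s ≠ ω t) : InjOn ω (η '' F) := by
  refine injOn_of_injOn_compl_fixedPoints hω.injOn_compl_fixedPoints ?_
  rintro x ⟨t, ht, htx⟩
  by_cases hηt : η t = t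
  · exact hω.isFixedPt_of_mem_fresh (by rwa [← htx, hηt])
  · by_contra hmoved
    exact him t x hηt hmoved htx

end isOmega

theorem lemma_tau_general {Vall Vex : Set Term} {ω η h : Term → Term} {A I : Set Atom}
    (hω : isOmega ω Vall Vex (termsOf A))
    (him : ∀ s t : Term, η s ≠ s → ω t ≠ t → η s ≠ ω t)
    (hI : Interp I) (hhom : isHom h A I) (hfac : FactorsThrough h η) :
    ∃ τ : Term → Term,
      (∀ t : Term, ¬ t.isVar → ¬ (τ t).isVar) ∧
      ∀ t ∈ termsOf A, h t = τ (ω (η t)) := by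
  let h_restrict : termsOf A → {t : Term // ¬ t.isVar} := fun t => ⟨h t, hhom.not_isVar hI t.2⟩
  have h_restrict_factorsThrough : FactorsThrough h_restrict (fun t => ω (η t)) := fun s t hst =>
    Subtype.ext (hfac (hω.injOn_image him (mem_image_of_mem η s.2) (mem_image_of_mem η t.2) hst))
  have : Nonempty {t : Term // ¬ t.isVar} := ⟨⟨.const 0, id⟩⟩
  obtain ⟨τ, hτ⟩ := (factorsThrough_iff h_restrict).mp h_restrict_factorsThrough
  exact ⟨fun t => τ t, fun t _ => (τ t).2,
    fun t ht => congrArg Subtype.val (congrFun hτ ⟨t, ht⟩)⟩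

/-- Lemma 1: if η is an mgu for the atom mapping m whose image is
disjoint from the image of ω, and h is a homomorphism (fixing all constants and
nulls) that is also a unifier for m, then there is a function τ on constants
and nulls such that h(t) = τ(tηω) for every term t on which h is defined. -/
theorem lemma_tau
    (Vall Vex : Set Term) (ω : Term → Term)
    (m : Atom → Option Atom) (η : Term → Term)
    (A I : Set Atom) (h : Term → Term)
    (hω : isOmega ω Vall Vex (termsOf (A ∪ amAtoms m)))
    (hmgu : isMGU η m)
    (him : ∀ s t : Term, η s ≠ s → ω t ≠ t → η s ≠ ω t)
    (hI : Interp I)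
    (hhom : isHom h A I)
    (hsubst : isSubst h)
    (huni : isUnifier h m) :
    ∃ τ : Term → Term,
      (∀ t : Term, ¬ t.isVar → ¬ (τ t).isVar) ∧
      ∀ t ∈ termsOf A, h t = τ (ω (η t)) :=
  lemma_tau_general (hω.anti (termsOf_mono subset_union_left)) him hI hhom
    (hmgu.factorsThrough huni)
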